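/- arXiv:1212.4532 — 2 statements merged into one kernel-verified Lean document; each statement's English description precedes it below -/
import Mathlib

section
/- Let D be a division ring with center F, K a proper division subring of D containing F, and N a normal subgroup of D^*. If N is radical over K, then no element of N \ K is a Kurosh element. -/
/-!
The hypothesis on `K` is used only to show that every `b ∈ N` has, for each `d ∈ D`, a power
commuting with `d` (`exists_pow_commute`): for `d ∉ K` some power `x` of `b` and its conjugates by
`d` and by `1 + d` all lie in `K`, which forces `d x = x d`. If `a ∈ N` lies in a division subring
`D₁` of finite dimension over its center, taking a common exponent for a spanning set of `D₁` shows
that the normal subgroup `N ∩ D₁` of `D₁ˣ` is radical over the center of `D₁`.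

It remains to see that such a normal subgroup is central (`commute_of_pow_mem`). Let `E` be a
division algebra of finite dimension over a central field `F`. If `F` is algebraic over a finite
field, `E` is commutative by Wedderburn's little theorem. Otherwise `F` has a valuation ring `V`
with a nonzero nonunit `π` whose square divides no prime that is nonzero in `F`. Given `a` in the
subgroup and `b ∈ E`, choose `s ∈ V` divisible enough for the commutator `c` of `1 + s b` and `a` to
be congruent to `1` modulo `π ^ 2` in the regular matrix representation. Some power of `c` is a
scalar, and `c` has norm `1`, so `c` has finite order. An element of finite order congruent to `1`
modulo `π ^ 2` is `1` (`eq_one_of_pow_eq_one`), and `c = 1` says that `a` commutes with `b`.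
-/

/-- A non-central element `x` of a division ring `D` is a Kurosh element if there is a
division subring `D₁` of `D` containing `x` such that `x` is non-central in `D₁` and
`D₁` is finite-dimensional over its own center. -/
def IsKurosh {D : Type*} [DivisionRing D] (x : D) : Prop :=
  ∃ D₁ : Subring D, (∀ y ∈ D₁, y⁻¹ ∈ D₁) ∧
    ∃ hx : x ∈ D₁, (⟨x, hx⟩ : D₁) ∉ Subring.center D₁ ∧
      Module.Finite (Subring.center D₁) D₁

/-! ### Powers commuting with a given element -/

/-- The step that eliminates `K`: if a normal subgroup `N` is radical over a proper division
subring, then every `b ∈ N` and every `d ∈ D` admit a power of `b` commuting with `d`. For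
`d ∉ K` one compares the conjugates of a power of `b` by `d` and by `1 + d`. -/
theorem exists_pow_commute {D : Type*} [DivisionRing D] (K : Subring D)
    (hKdiv : ∀ x ∈ K, x⁻¹ ∈ K) (hK : ∃ d, d ∉ K) (N : Subgroup Dˣ) [hN : N.Normal]
    (hrad : ∀ a ∈ N, ∃ n : ℕ, 0 < n ∧ ((a : Dˣ) : D) ^ n ∈ K) (d : D) (b : Dˣ) (hb : b ∈ N) :
    ∃ n : ℕ, 0 < n ∧ Commute d ((b : D) ^ n) := by
  have key : ∀ a : D, a ∉ K → ∃ n : ℕ, 0 < n ∧ Commute a ((b : D) ^ n) := by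
    intro a ha
    have ha0 : a ≠ 0 := fun h => ha (h ▸ K.zero_mem)
    have ha1 : 1 + a ≠ 0 := fun h => ha (by
      rw [← neg_eq_of_add_eq_zero_right h]; exact K.neg_mem K.one_mem)
    obtain ⟨n₀, hn₀, h₀⟩ := hrad b hb
    obtain ⟨n₁, hn₁, h₁⟩ := hrad _ (hN.conj_mem b hb (Units.mk0 a ha0))
    obtain ⟨n₂, hn₂, h₂⟩ := hrad _ (hN.conj_mem b hb (Units.mk0 (1 + a) ha1))
    rw [← Units.val_pow_eq_pow_val, conj_pow] at h₁ h₂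
    simp only [Units.val_mul, Units.val_pow_eq_pow_val, Units.val_inv_eq_inv_val,
      Units.val_mk0] at h₁ h₂
    have e₀ : (b : D) ^ (n₀ * n₁ * n₂) ∈ K := by
      rw [mul_assoc, pow_mul]; exact K.pow_mem h₀ _
    have conjp : ∀ (c x : D) (m : ℕ), c ≠ 0 → (c * x * c⁻¹) ^ m = c * x ^ m * c⁻¹ :=
      fun c x m hc => by
        rw [eq_mul_inv_iff_mul_eq₀ hc]
        exact (SemiconjBy.pow_right (by simp [SemiconjBy, mul_assoc, hc] :
          SemiconjBy c x (c * x * c⁻¹)) m).eq.symm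
    have e₁ : a * (b : D) ^ (n₀ * n₁ * n₂) * a⁻¹ ∈ K := by
      have := K.pow_mem h₁ (n₀ * n₂)
      rw [conjp _ _ _ ha0, ← pow_mul] at this
      convert this using 4; ring
    have e₂ : (1 + a) * (b : D) ^ (n₀ * n₁ * n₂) * (1 + a)⁻¹ ∈ K := by
      have := K.pow_mem h₂ (n₀ * n₁)
      rw [conjp _ _ _ ha1, ← pow_mul] at this
      convert this using 4; ring
    refine ⟨n₀ * n₁ * n₂, by positivity, ?_⟩
    generalize (b : D) ^ (n₀ * n₁ * n₂) = x at e₀ e₁ e₂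
    set k₁ := a * x * a⁻¹ with hk₁
    set k₂ := (1 + a) * x * (1 + a)⁻¹ with hk₂
    have f₁ : a * x = k₁ * a := by rw [hk₁, inv_mul_cancel_right₀ ha0]
    have f₂ : (1 + a) * x = k₂ * (1 + a) := by rw [hk₂, inv_mul_cancel_right₀ ha1]
    -- Subtracting the two relations expresses `a` through elements of `K` unless `k₁ = k₂`.
    have f₃ : (k₁ - k₂) * a = k₂ - x := by
      rw [sub_mul, ← f₁]
      have : x + a * x = k₂ + k₂ * a := by simpa [add_mul, mul_add] using f₂
      rw [sub_eq_sub_iff_add_eq_add, add_comm, this, add_comm]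
    by_cases h : k₁ = k₂
    · have : k₂ = x := by rw [h, sub_self, zero_mul] at f₃; exact (sub_eq_zero.1 f₃.symm)
      rw [Commute, SemiconjBy, f₁, h, this]
    · refine absurd ?_ ha
      have : a = (k₁ - k₂)⁻¹ * (k₂ - x) := by
        rw [← f₃, inv_mul_cancel_left₀ (sub_ne_zero.2 h)]
      rw [this]
      exact K.mul_mem (hKdiv _ (K.sub_mem e₁ e₂)) (K.sub_mem e₂ e₀)
  -- An element of `K` is a difference of two elements outside `K`.
  by_cases hd : d ∈ K
  · obtain ⟨a, ha⟩ := hK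
    obtain ⟨n, hn, h⟩ := key a ha
    obtain ⟨m, hm, h'⟩ := key (a + d) fun h => ha (by simpa using K.sub_mem h hd)
    refine ⟨n * m, by positivity, ?_⟩
    have g₁ : Commute a ((b : D) ^ (n * m)) := by rw [pow_mul]; exact h.pow_right m
    have g₂ : Commute (a + d) ((b : D) ^ (n * m)) := by
      rw [mul_comm, pow_mul]; exact h'.pow_right n
    simpa using g₂.sub_left g₁
  · exact key d hd

/-! ### Algebras over algebraic extensions of finite fields -/

/-- The case where no useful valuation exists on `F`: a division algebra of finite dimension over
an algebraic extension of `𝔽_p` is commutative. Two elements, written as matrices through the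
regular representation, have all their entries in a finite subring of `F`, so they lie in a finite
subring of `E`, to which Wedderburn's little theorem applies. -/
theorem commute_of_algebraic {p : ℕ} [Fact p.Prime] {F E : Type*} [Field F] [DivisionRing E]
    [Algebra F E] [FiniteDimensional F E] [CharP F p] (hF : ∀ x : F, IsIntegral ℤ x) (x y : E) :
    x * y = y * x := by
  classical
  let := ZMod.algebra F p
  let b := Module.finBasis F E
  let ρ := Algebra.leftMulMatrix b
  let S : Set F := Set.range (fun i : _ × _ => ρ x i.1 i.2) ∪
    Set.range (fun i : _ × _ => ρ y i.1 i.2)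
  have hS : S.Finite := (Set.finite_range _).union (Set.finite_range _)
  let A := Algebra.adjoin (ZMod p) S
  have hA : Finite A := by
    have : Module.Finite (ZMod p) A := Algebra.finite_adjoin_of_finite_of_isIntegral hS
      fun z _ => (hF z).tower_top
    exact Module.finite_of_finite (ZMod p)
  let R : Subring E := (A.val.toRingHom.mapMatrix (m := Fin _)).range.comap ρ.toRingHom
  have hmem : ∀ z : E, (∀ i j, ρ z i j ∈ A) → z ∈ R := fun z hz =>
    ⟨Matrix.of fun i j => ⟨ρ z i j, hz i j⟩, by ext i j; simp⟩
  have hR : Finite R := by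
    have : Finite (A.val.toRingHom.mapMatrix (m := Fin (Module.finrank F E))).range :=
      (Set.finite_range _).to_subtype
    exact Finite.of_injective (fun r : R => (⟨ρ r, r.2⟩ :
      (A.val.toRingHom.mapMatrix (m := Fin (Module.finrank F E))).range)) fun r s h =>
        Subtype.ext (Algebra.leftMulMatrix_injective b (congrArg Subtype.val h))
  have hx : x ∈ R := hmem x fun i j => Algebra.subset_adjoin (Or.inl ⟨(i, j), rfl⟩)
  have hy : y ∈ R := hmem y fun i j => Algebra.subset_adjoin (Or.inr ⟨(i, j), rfl⟩)
  have := (Finite.isDomain_to_isField R).mul_comm ⟨x, hx⟩ ⟨y, hy⟩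
  exact congrArg Subtype.val this

/-! ### A valuation ring and its congruence subgroup -/

/-- Unless `F` is algebraic over a finite field, it has a valuation ring `V` with a nonzero
nonunit `π` such that `π ^ 2` divides no prime number that is nonzero in `F`. In characteristic
zero `π = 2` works; in characteristic `p` all other primes are units of `V`, so any `π` works. -/
theorem exists_valuationSubring {F : Type*} [Field F]
    (hF : CharZero F ∨ ∃ x : F, ¬ IsIntegral ℤ x) :
    ∃ (V : ValuationSubring F) (π : V), π ≠ 0 ∧ ¬ IsUnit π ∧
      ∀ q : ℕ, q.Prime → (q : F) ≠ 0 → ¬ π ^ 2 ∣ (q : V) := by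
  -- The inverse of a non-integral element is a nonunit of some valuation ring.
  have aux : ∀ y : F, ¬ IsIntegral ℤ y → ∃ (V : ValuationSubring F) (π : V),
      (π : F) = y⁻¹ ∧ π ≠ 0 ∧ ¬ IsUnit π := by
    intro y hy
    have hc : IsIntegrallyClosedIn (integralClosure ℤ F).toSubring F :=
      inferInstanceAs (IsIntegrallyClosedIn (integralClosure ℤ F) F)
    obtain ⟨V, -, hV⟩ := Subring.exists_le_valuationSubring_of_isIntegrallyClosedIn
      (x := y) (R := (integralClosure ℤ F).toSubring) hy
    have hy0 : y ≠ 0 := fun h => hV (h ▸ V.zero_mem)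
    refine ⟨V, ⟨y⁻¹, (V.mem_or_inv_mem y).resolve_left hV⟩, rfl,
      fun h => inv_ne_zero hy0 (congrArg Subtype.val h), fun h => hV ?_⟩
    obtain ⟨z, hz⟩ := h.exists_right_inv
    have hz' : y⁻¹ * (z : F) = 1 := congrArg Subtype.val hz
    have : (z : F) = y := ((inv_mul_eq_one₀ hy0).1 hz').symm
    exact this ▸ z.2
  have coprime_unit : ∀ (V : ValuationSubring F) (π : V) (p q : ℕ), p.Coprime q →
      π ∣ (p : V) → π ∣ (q : V) → IsUnit π := by
    intro V π p q h hp hq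
    have := Nat.isCoprime_iff_coprime.2 h
    obtain ⟨u, v, huv⟩ := this
    refine isUnit_of_dvd_one ?_
    have e : (u : V) * (p : V) + (v : V) * (q : V) = 1 := by
      exact_mod_cast congrArg (Int.cast : ℤ → V) huv
    rw [← e]
    exact dvd_add (hp.mul_left _) (hq.mul_left _)
  by_cases h0 : CharZero F
  · have h2 : ¬ IsIntegral ℤ ((2 : F)⁻¹) := by
      intro h
      have h' : IsIntegral ℤ ((2 : ℚ)⁻¹) := by
        rw [← isIntegral_algebraMap_iff (algebraMap ℚ F).injective (B := F)]
        simpa using h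
      obtain ⟨z, hz⟩ := IsIntegrallyClosed.isIntegral_iff.1 h'
      have : (2 * z : ℚ) = 1 := by
        rw [show (z : ℚ) = 2⁻¹ from hz]; norm_num
      norm_cast at this
      omega
    obtain ⟨V, π, hπ, hπ0, hu⟩ := aux _ h2
    have hπ2 : π = ((2 : ℕ) : V) := Subtype.ext (by rw [hπ, inv_inv]; rfl)
    refine ⟨V, π, hπ0, hu, fun q hq _ hd => ?_⟩
    by_cases h : q = 2
    · subst h
      rw [← hπ2, sq] at hd
      obtain ⟨w, hw⟩ := hd
      refine hu (IsUnit.of_mul_eq_one w (mul_left_cancel₀ hπ0 ?_))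
      rw [← mul_assoc, ← hw, mul_one]
    · refine hu (coprime_unit V π 2 q ?_ (hπ2 ▸ dvd_rfl) ((dvd_pow_self π two_ne_zero).trans hd))
      exact (Nat.coprime_primes Nat.prime_two hq).2 (Ne.symm h)
  · obtain ⟨y, hy⟩ := hF.resolve_left h0
    obtain ⟨V, π, -, hπ0, hu⟩ := aux y hy
    refine ⟨V, π, hπ0, hu, fun q hq hq0 hd => ?_⟩
    obtain ⟨p, hp⟩ := CharP.exists F
    rcases CharP.char_is_prime_or_zero F p with hpp | rfl
    · refine hu (coprime_unit V π p q ?_ ?_ ((dvd_pow_self π two_ne_zero).trans hd))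
      · refine (Nat.coprime_primes hpp hq).2 ?_
        rintro rfl
        exact hq0 (CharP.cast_eq_zero F p)
      · have : (p : V) = 0 := Subtype.ext (by simp)
        rw [this]; exact dvd_zero _
    · exact h0 (CharP.charP_to_charZero F)

/-- The congruence subgroup modulo `π ^ 2` has no torsion coming from `E`: an element of finite
order whose left multiplication matrix is `V`-integral and congruent to `1` modulo `π ^ 2` is
equal to `1`. Otherwise some power `c'` has prime order `q`; then `1 + c' + ⋯ + c' ^ (q - 1) = 0`
because `E` has no zero divisors, and reducing modulo `π ^ 2` gives `π ^ 2 ∣ q`. -/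
theorem eq_one_of_pow_eq_one {F E : Type*} [Field F] [DivisionRing E] [Algebra F E]
    [FiniteDimensional F E] (V : ValuationSubring F) (π : V)
    (hq : ∀ q : ℕ, q.Prime → (q : F) ≠ 0 → ¬ π ^ 2 ∣ (q : V))
    (c : E) (Z : Matrix (Fin (Module.finrank F E)) (Fin (Module.finrank F E)) V)
    (hc : Algebra.leftMulMatrix (Module.finBasis F E) c = V.subtype.mapMatrix (1 + π ^ 2 • Z))
    (n : ℕ) (hn : 0 < n) (hcn : c ^ n = 1) : c = 1 := by
  by_contra hne
  set ρ := Algebra.leftMulMatrix (Module.finBasis F E)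
  set ι := V.subtype.mapMatrix (m := Fin (Module.finrank F E))
  have hpos : 0 < orderOf c := orderOf_pos_iff.2 (isOfFinOrder_iff_pow_eq_one.2 ⟨n, hn, hcn⟩)
  obtain ⟨q, hqp, k, hk⟩ := Nat.exists_prime_and_dvd (mt orderOf_eq_one_iff.1 hne)
  have hk0 : k ≠ 0 := by rintro rfl; simp_all
  have hc1 : c ^ k ≠ 1 := fun h => by
    have := Nat.le_of_dvd (Nat.pos_of_ne_zero hk0) (orderOf_dvd_of_pow_eq_one h)
    have := hqp.two_le
    nlinarith [Nat.pos_of_ne_zero hk0]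
  have hcq : (c ^ k) ^ q = 1 := by rw [← pow_mul, mul_comm, ← hk, pow_orderOf_eq_one]
  -- In characteristic `q`, `(c ^ k) ^ q = 1` reads `(c ^ k - 1) ^ q = 0`.
  have hq0 : (q : F) ≠ 0 := by
    intro h
    have : Fact q.Prime := ⟨hqp⟩
    have : CharP E q := (CharP.charP_iff_prime_eq_zero hqp).2 (by
      simpa using congrArg (algebraMap F E) h)
    have h1 := sub_pow_char_of_commute (p := q) (Commute.one_right (c ^ k))
    rw [hcq, one_pow, sub_self] at h1
    exact hc1 (sub_eq_zero.1 (pow_eq_zero_iff hqp.ne_zero |>.1 h1))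
  have hsum : ∑ i ∈ Finset.range q, (c ^ k) ^ i = 0 := by
    have := geom_sum_mul (c ^ k) q
    rw [hcq, sub_self] at this
    exact (mul_eq_zero.1 this).resolve_right (sub_ne_zero.2 hc1)
  have hpow : ∀ i : ℕ, ∃ W : Matrix _ _ V, (1 + π ^ 2 • Z) ^ i = 1 + π ^ 2 • W := by
    intro i
    induction i with
    | zero => exact ⟨0, by simp⟩
    | succ i ih =>
      obtain ⟨W, hW⟩ := ih
      refine ⟨W * (1 + π ^ 2 • Z) + Z, ?_⟩
      rw [pow_succ, hW, add_mul, one_mul, smul_add, smul_mul_assoc]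
      abel
  choose W hW using hpow
  have hM : (q : Matrix _ _ V) + π ^ 2 • ∑ i ∈ Finset.range q, W (k * i) = 0 := by
    have hinj : Function.Injective ι := Matrix.map_injective Subtype.val_injective
    apply hinj
    have : (q : Matrix _ _ V) + π ^ 2 • ∑ i ∈ Finset.range q, W (k * i) =
        ∑ i ∈ Finset.range q, ((1 + π ^ 2 • Z) ^ k) ^ i := by
      simp_rw [← pow_mul, hW, Finset.sum_add_distrib, Finset.smul_sum]
      simp
    rw [this, map_sum, map_zero, ← map_zero ρ, ← hsum, map_sum]
    simp_rw [map_pow, hc]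
  have : NeZero (Module.finrank F E) := ⟨Module.finrank_pos.ne'⟩
  refine hq q hqp hq0 ⟨-(∑ i ∈ Finset.range q, W (k * i)) 0 0, ?_⟩
  have := congrFun (congrFun hM 0) 0
  rw [Matrix.add_apply, Matrix.smul_apply, smul_eq_mul, Matrix.zero_apply,
    Matrix.natCast_apply, if_pos rfl] at this
  rw [mul_neg]
  exact eq_neg_of_add_eq_zero_left this

/-- A common denominator `r` of the entries of a matrix over `Frac V`; every multiple of `r`
clears the denominators as well, so that one multiplier can serve several matrices. -/
theorem exists_denominator {F ι : Type*} [Field F] [Finite ι] (V : ValuationSubring F)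
    (M : Matrix ι ι F) :
    ∃ r : V, r ≠ 0 ∧ ∀ s : V, r ∣ s → ∃ M' : Matrix ι ι V, M'.map V.subtype = (s : F) • M := by
  obtain ⟨r, hr⟩ := IsLocalization.exist_integer_multiples_of_finite (nonZeroDivisors V)
    (fun i : ι × ι => M i.1 i.2)
  refine ⟨r, nonZeroDivisors.ne_zero r.2, ?_⟩
  rintro _ ⟨s, rfl⟩
  choose f hf using hr
  refine ⟨Matrix.of fun i j => s * f (i, j), ?_⟩
  ext i j
  have := hf (i, j)
  simp only [Matrix.map_apply, Matrix.of_apply, Matrix.smul_apply]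
  have h2 : ((f (i, j) : V) : F) = ((r : V) : F) * M i j := this
  simp [h2]; ring

/-! ### Normal subgroups radical over the center -/

/-- Herstein's theorem in the finite-dimensional case: a normal subgroup of `Eˣ` that is radical
over the central subfield `F` consists of elements commuting with all of `E`. -/
theorem commute_of_pow_mem {F E : Type*} [Field F] [DivisionRing E] [Algebra F E]
    [FiniteDimensional F E] (N : Subgroup Eˣ) [hN : N.Normal]
    (hrad : ∀ a ∈ N, ∃ n : ℕ, 0 < n ∧ ((a : Eˣ) : E) ^ n ∈ (algebraMap F E).range)
    (a : Eˣ) (ha : a ∈ N) (b : E) : b * a = a * b := by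
  classical
  by_cases hF : CharZero F ∨ ∃ x : F, ¬ IsIntegral ℤ x
  swap
  · push Not at hF
    obtain ⟨p, hp⟩ := CharP.exists F
    rcases CharP.char_is_prime_or_zero F p with hpp | rfl
    · have : Fact p.Prime := ⟨hpp⟩
      exact commute_of_algebraic (p := p) hF.2 _ _
    · exact absurd (CharP.charP_to_charZero F) hF.1
  obtain ⟨V, π, hπ0, hπu, hq⟩ := exists_valuationSubring hF
  set ρ := Algebra.leftMulMatrix (Module.finBasis F E) with hρ
  set ι := V.subtype.mapMatrix (m := Fin (Module.finrank F E)) with hι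
  have hinj : Function.Injective ι := Matrix.map_injective Subtype.val_injective
  obtain ⟨r₁, hr₁, h₁⟩ := exists_denominator V (ρ b)
  obtain ⟨r₂, hr₂, h₂⟩ := exists_denominator V (ρ (b * a - a * b))
  obtain ⟨r₃, hr₃, h₃⟩ := exists_denominator V (ρ (↑a⁻¹ : E))
  set r := r₁ * r₂ * r₃ with hr
  have hr0 : r ≠ 0 := mul_ne_zero (mul_ne_zero hr₁ hr₂) hr₃
  obtain ⟨B, hB⟩ := h₁ r ⟨r₂ * r₃, by rw [hr]; ring⟩
  obtain ⟨C, hC⟩ := h₂ r ⟨r₁ * r₃, by rw [hr]; ring⟩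
  obtain ⟨A, hA⟩ := h₃ r ⟨r₁ * r₂, by rw [hr]; ring⟩
  change ι _ = _ at hB hC hA
  set s : V := π ^ 2 * r ^ 2 with hs
  have hs0 : (s : F) ≠ 0 := by
    simpa [hs] using And.intro hπ0 hr0
  have hιs : ∀ (t : V) M, ι (t • M) = (t : F) • ι M := fun t M => by
    ext i j; simp [hι]
  -- The determinant reduces to `1` in the residue field of `V`, since `π` reduces to `0`.
  have hU : IsUnit (1 + (π ^ 2 * r) • B) := by
    rw [Matrix.isUnit_iff_isUnit_det]
    by_contra hd
    have hm : (1 + (π ^ 2 * r) • B).det ∈ IsLocalRing.maximalIdeal V := hd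
    rw [← IsLocalRing.residue_eq_zero_iff, RingHom.map_det] at hm
    have hπ : IsLocalRing.residue V π = 0 := (IsLocalRing.residue_eq_zero_iff _).2 hπu
    have : (IsLocalRing.residue V).mapMatrix (1 + (π ^ 2 * r) • B) = 1 := by
      rw [map_add, map_one, add_eq_left]
      ext i j
      simp [hπ]
    rw [this, Matrix.det_one] at hm
    exact one_ne_zero hm
  have hx : ρ (1 + (s : F) • b) = ι (1 + (π ^ 2 * r) • B) := by
    rw [map_add, map_one, map_smul, map_add, map_one, hιs, hB, smul_smul, hs]
    congr 2; push_cast; ring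
  have hx0 : 1 + (s : F) • b ≠ 0 := by
    intro h
    rw [h, map_zero, ← map_zero ι] at hx
    have : NeZero (Module.finrank F E) := ⟨Module.finrank_pos.ne'⟩
    exact hU.ne_zero (hinj hx).symm
  set x : Eˣ := Units.mk0 _ hx0 with hxdef
  obtain ⟨U, hU⟩ := hU
  -- The commutator of `1 + s • b` and `a` lies in `N` and is congruent to `1` modulo `π ^ 2`.
  set c : Eˣ := x * a * x⁻¹ * a⁻¹ with hcdef
  have hcN : c ∈ N := N.mul_mem (hN.conj_mem a ha x) (N.inv_mem ha)
  have hxinv : ρ (↑x⁻¹ : E) = ι (↑U⁻¹ : Matrix _ _ V) := by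
    have e1 : ρ (↑x⁻¹ : E) * ι U = 1 := by
      rw [hU, ← hx, ← map_mul]
      change ρ (↑x⁻¹ * ↑x) = 1
      simp
    calc ρ (↑x⁻¹ : E) = ρ (↑x⁻¹ : E) * ι (U * ↑U⁻¹) := by simp
      _ = _ := by rw [map_mul, ← mul_assoc, e1, one_mul]
  have hcval : (c : E) = 1 + (s : F) • ((b * a - a * b) * ↑x⁻¹ * ↑a⁻¹) := by
    have e : (x : E) * a = a * x + (s : F) • (b * a - a * b) := by
      simp only [hxdef, Units.val_mk0, add_mul, mul_add, one_mul, mul_one, smul_mul_assoc,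
        mul_smul_comm, smul_sub]
      abel
    rw [hcdef, Units.val_mul, Units.val_mul, Units.val_mul, e, add_mul, add_mul]
    simp
  have hcm : ρ c = ι (1 + π ^ 2 • (C * (↑U⁻¹ : Matrix _ _ V) * A)) := by
    rw [hcval, map_add, map_one, map_smul, map_mul, map_mul, hxinv, map_add, map_one, hιs,
      map_mul, map_mul, hC, hA, smul_mul_assoc, smul_mul_assoc, mul_smul_comm, smul_smul,
      smul_smul, hs]
    congr 2; push_cast; ring
  have hnorm : Algebra.norm F (c : E) = 1 := by
    have : ∀ u : Eˣ, Algebra.norm F (u : E) = (Units.map (Algebra.norm F (S := E)) u : Fˣ) :=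
      fun u => rfl
    rw [this, hcdef]
    simp only [map_mul, map_inv]
    rw [mul_right_comm _ _ (_)⁻¹, mul_inv_cancel_right, mul_inv_cancel]; rfl
  -- Some power of `c` is a scalar of norm `1`, which is a root of unity.
  obtain ⟨n, hn, z, hz⟩ := hrad c hcN
  have hfin : (c : E) ^ (n * Module.finrank F E) = 1 := by
    have := congrArg (Algebra.norm F) hz
    rw [Algebra.norm_algebraMap, map_pow, hnorm, one_pow] at this
    rw [pow_mul, ← hz, ← map_pow, this, map_one]
  have hc1 := eq_one_of_pow_eq_one V π hq (c : E) _ hcm _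
    (Nat.mul_pos hn Module.finrank_pos) hfin
  have h0 : (s : F) • ((b * a - a * b) * ↑x⁻¹ * ↑a⁻¹) = 0 := by
    simpa [hc1] using hcval
  rw [smul_eq_zero_iff_right hs0] at h0
  simpa [sub_eq_zero] using h0

/-! ### Kurosh elements -/

/-- Let `D` be a division ring with center `F`, `K` a proper division subring of `D`
containing `F`, and `N` a normal subgroup of `D^*`. If `N` is radical over `K`, then
no element of `N \ K` is a Kurosh element. -/
theorem stmt_9 (D : Type*) [DivisionRing D]
    (K : Subalgebra (Subring.center D) D)
    (hKdiv : ∀ x ∈ K, x⁻¹ ∈ K) (hKne : K ≠ ⊤)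
    (N : Subgroup Dˣ) [N.Normal]
    (hrad : ∀ a ∈ N, ∃ n : ℕ, 0 < n ∧ ((a : Dˣ) : D) ^ n ∈ K) :
    ∀ a ∈ N, ((a : Dˣ) : D) ∉ K → ¬ IsKurosh ((a : Dˣ) : D) := by
  rintro a ha - ⟨D₁, hinv, hx, hnc, hfin⟩
  have hK : ∃ d, d ∉ K.toSubring := by
    by_contra! h
    exact hKne (eq_top_iff.2 fun d _ => h d)
  have hcomm := exists_pow_commute K.toSubring hKdiv hK N hrad
  let S : Subfield D := { D₁ with inv_mem' := hinv }
  have : Module.Finite (Subring.center S) S := hfin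
  let N' : Subgroup Sˣ := N.comap (Units.map (S.subtype : S →* D))
  have hN' : ∀ u ∈ N', ∃ n : ℕ, 0 < n ∧
      ((u : Sˣ) : S) ^ n ∈ (algebraMap (Subring.center S) S).range := by
    intro u hu
    -- A common exponent for a finite spanning set makes the power of `u` central in `S`.
    obtain ⟨T, hT⟩ := Module.Finite.fg_top (R := Subring.center S) (M := S)
    choose f hf hfc using fun d : D => hcomm d _ hu
    refine ⟨∏ t ∈ T, f t, Finset.prod_pos fun t _ => hf t, ?_⟩
    have hcen : (u : S) ^ (∏ t ∈ T, f (t : D)) ∈ Subring.center S := by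
      rw [Subring.mem_center_iff]
      intro g
      have hg : g ∈ Submodule.span (Subring.center S) (T : Set S) := hT ▸ Submodule.mem_top
      induction hg using Submodule.span_induction with
      | mem t ht =>
        obtain ⟨k, hk⟩ := Finset.dvd_prod_of_mem (fun t : S => f (t : D)) ht
        rw [hk, pow_mul]
        refine (Commute.pow_right (Subtype.ext ?_ : Commute t _) k).eq
        exact (hfc t).eq
      | zero => simp
      | add x y _ _ hx hy => rw [add_mul, mul_add, hx, hy]
      | smul z x _ hx => rw [smul_mul_assoc, mul_smul_comm, hx]
    exact ⟨⟨_, hcen⟩, rfl⟩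
  let u : Sˣ := Units.mk0 ⟨(a : D), hx⟩ fun h => a.ne_zero (congrArg Subtype.val h)
  have hu : u ∈ N' := by
    have : Units.map (S.subtype : S →* D) u = a := Units.ext rfl
    change Units.map (S.subtype : S →* D) u ∈ N
    rwa [this]
  refine hnc (Subring.mem_center_iff.2 fun g => ?_)
  exact commute_of_pow_mem (F := Subring.center S) N' hN' u hu g
end

section
/- Let D be a locally finite division ring with center F, and let N be a normal subgroup of D^* that is radical over a proper division subring K of D. Then N ⊆ F. -/
/-!
The proof has two steps.

The Cartan-Brauer-Hua trick, applied to powers, shows that `N` is radical over the centralizer of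
every element of `D` (`radical_over_centralizer`). Given `a ∈ N` and `x ∈ D`, local finiteness puts
`a` and `x` in a division subring `E` finite over its center, and some power of each element of
`N ∩ E` commutes with a finite spanning set of `E`, so `N ∩ E` is radical over the center of `E`.

It remains to treat a division ring `D` finite over its center `F`, with `N` radical over `F`
(`commute_of_radical_over_center`). If `a ∈ N` and `x` do not commute, consider for scalars `t` the
commutators `v t = (x + t) a (x + t)⁻¹ a⁻¹ ∈ N`. A power of `v t` is central, and its norm is `1`,
so `v t` is torsion (`commutator_torsion`). Let `k` be the prime field and `L` a purely
transcendental extension of `k` inside `F` over which `F` is algebraic. For `t ∈ L` all `v t` lie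
in one subalgebra finite over `L`, and since `k` is algebraically closed in `L` they have bounded
degree over `k`; over a prime field this bounds their order (`RootsBounded`). So `v t ^ e = 1` for
some `e ≠ 0` and infinitely many `t`, hence for an indeterminate `t`; but `v t` is a series in
`t⁻¹` with constant term `1`, which forces `v t = 1` and `a x = x a`
(`eq_of_infinite_pow_eq_one`).
-/

section

open Polynomial

/-! ### Roots of unity of bounded degree -/

/-- The field `k` is algebraically closed in a purely transcendental extension `k(x)`: the
polynomial ring `k[x]` is integrally closed, so an element of `k(x)` integral over `k` is a
polynomial, and `x` stays algebraically independent over the algebraic closure of `k` in `C`, so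
that polynomial is constant. -/
theorem mem_range_of_isIntegral_purelyTranscendental {k C ι : Type*} [Field k] [Field C]
    [Algebra k C] {x : ι → C} (hx : AlgebraicIndependent k x) (c : C)
    (hc : c ∈ IntermediateField.adjoin k (Set.range x)) (hi : IsIntegral k c) :
    ∃ r : k, algebraMap k C r = c := by
  let z := hx.aevalEquivField.symm ⟨c, hc⟩
  have hi' : IsIntegral k (⟨c, hc⟩ : IntermediateField.adjoin k (Set.range x)) :=
    (isIntegral_algHom_iff (IntermediateField.val _) Subtype.val_injective).mp hi
  have hz : IsIntegral k z := hi'.map hx.aevalEquivField.symm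
  obtain ⟨p, hp⟩ := (IsIntegrallyClosed.isIntegral_iff (R := MvPolynomial ι k)).mp
    (hz.tower_top (A := MvPolynomial ι k))
  have hpc : MvPolynomial.aeval x p = c := by
    rw [← hx.aevalEquivField_algebraMap_apply_coe, hp]
    simp [z]
  have hx1 := hx.algebraicClosure
  let c' : algebraicClosure k C := ⟨c, mem_algebraicClosure_iff.mpr hi.isAlgebraic⟩
  have h1 : MvPolynomial.map (algebraMap k (algebraicClosure k C)) p = MvPolynomial.C c' := by
    apply hx1
    rw [MvPolynomial.aeval_map_algebraMap, hpc, MvPolynomial.aeval_C]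
    rfl
  refine ⟨p.coeff 0, ?_⟩
  have h2 := congrArg (MvPolynomial.coeff 0) h1
  rw [MvPolynomial.coeff_map, MvPolynomial.coeff_zero_C] at h2
  exact congrArg Subtype.val h2

/-- The roots of unity of bounded degree over `k` have bounded exponent: for each `d` some `e > 0`
kills every root of unity of degree at most `d`. A root of unity is represented by its minimal
polynomial `P`, so that "`ζ ^ n = 1`" reads `P ∣ X ^ n - 1`. -/
def RootsBounded (k : Type*) [Field k] : Prop :=
  ∀ d : ℕ, ∃ e : ℕ, 0 < e ∧ ∀ P : k[X], Irreducible P → P.Monic → P.natDegree ≤ d →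
    (∃ n : ℕ, 0 < n ∧ P ∣ X ^ n - 1) → P ∣ X ^ e - 1

/-- Over a finite field there are only finitely many polynomials of degree at most `d`. -/
theorem rootsBounded_of_finite (k : Type*) [Field k] [Finite k] : RootsBounded k := by
  classical
  intro d
  have hfin : {P : k[X] | P.natDegree ≤ d}.Finite := by
    apply Set.Finite.of_finite_image (f := fun P : k[X] => fun i : Fin (d + 1) => P.coeff i)
      (Set.toFinite _)
    intro P hP Q hQ h
    ext i
    by_cases hi : i < d + 1
    · exact congrFun h ⟨i, hi⟩
    · simp only [Set.mem_ofPred_eq] at hP hQ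
      rw [coeff_eq_zero_of_natDegree_lt (by omega), coeff_eq_zero_of_natDegree_lt (by omega)]
  let f : k[X] → ℕ := fun P => if h : ∃ n : ℕ, 0 < n ∧ P ∣ X ^ n - 1 then h.choose else 1
  have hf0 : ∀ P, 0 < f P := by
    intro P
    by_cases h : ∃ n : ℕ, 0 < n ∧ P ∣ X ^ n - 1
    · simp only [f, dif_pos h]; exact h.choose_spec.1
    · simp [f, dif_neg h]
  refine ⟨∏ P ∈ hfin.toFinset, f P, Finset.prod_pos fun P _ => hf0 P, ?_⟩
  intro P _ _ hd h
  have h1 : P ∣ X ^ f P - 1 := by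
    simp only [f, dif_pos h]; exact h.choose_spec.2
  have h2 : f P ∣ ∏ P ∈ hfin.toFinset, f P := Finset.dvd_prod_of_mem f (by simpa using hd)
  obtain ⟨m, hm⟩ := h2
  rw [hm, pow_mul]
  exact h1.trans (sub_one_dvd_pow_sub_one _ _)

/-- If `q = p ^ j` exactly divides `n` then `φ(q) ∣ φ(n)` and `q ≤ 2 φ(q)`, so `q ≤ 2 d`. -/
theorem dvd_factorial_of_totient_le {n d : ℕ} (hn : 0 < n) (h : n.totient ≤ d) :
    n ∣ (2 * d).factorial := by
  rw [← Nat.factorization_prime_le_iff_dvd hn.ne' (Nat.factorial_ne_zero _)]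
  intro p hp
  rw [← hp.pow_dvd_iff_le_factorization (Nat.factorial_ne_zero _)]
  set j := n.factorization p with hj
  rcases Nat.eq_zero_or_pos j with h0 | h0
  · simp [h0]
  apply Nat.dvd_factorial (pow_pos hp.pos _)
  have h1 : (p ^ j).totient ≤ d :=
    (Nat.le_of_dvd (Nat.totient_pos.mpr hn)
      (Nat.totient_dvd_of_dvd (Nat.ordProj_dvd n p))).trans h
  rw [Nat.totient_prime_pow hp h0] at h1
  obtain ⟨i, hi⟩ : ∃ i, j = i + 1 := ⟨j - 1, by omega⟩
  rw [hi] at h1 ⊢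
  simp only [Nat.add_sub_cancel] at h1
  have h2 : p ≤ 2 * (p - 1) := by have := hp.two_le; omega
  calc p ^ (i + 1) = p ^ i * p := pow_succ _ _
    _ ≤ p ^ i * (2 * (p - 1)) := Nat.mul_le_mul_left _ h2
    _ = 2 * (p ^ i * (p - 1)) := by ring
    _ ≤ 2 * d := Nat.mul_le_mul_left _ h1

theorem rootsBounded_rat : RootsBounded ℚ := by
  intro d
  refine ⟨(2 * d).factorial, Nat.factorial_pos _, ?_⟩
  rintro P hP hPm hd ⟨n, hn, hPn⟩
  rw [← prod_cyclotomic_eq_X_pow_sub_one hn, hP.prime.dvd_finsetProd_iff] at hPn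
  obtain ⟨i, hi, hPi⟩ := hPn
  have hi0 : 0 < i := Nat.pos_of_mem_divisors hi
  have hass := hP.associated_of_dvd (cyclotomic.irreducible_rat hi0) hPi
  rw [eq_of_monic_of_associated hPm (cyclotomic.monic i ℚ) hass] at hd ⊢
  rw [natDegree_cyclotomic] at hd
  obtain ⟨m, hm⟩ := dvd_factorial_of_totient_le hi0 hd
  rw [hm, pow_mul]
  exact (cyclotomic.dvd_X_pow_sub_one i ℚ).trans (sub_one_dvd_pow_sub_one _ _)

/-- The minimal polynomial over `L` of a torsion element `v` divides some `X ^ n - 1`, so its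
coefficients are integral over `k`; as `k` is algebraically closed in `L`, it is defined over `k`.
Its degree is at most `d`, hence the common exponent `e` kills `v`. -/
theorem pow_eq_one_of_finrank_le {k C D : Type*} [Field k] [Field C]
    [Algebra k C] {L : IntermediateField k C}
    (hL : ∀ c ∈ L, IsIntegral k c → ∃ r : k, algebraMap k C r = c)
    [DivisionRing D] [Algebra C D] {d e : ℕ}
    (he : ∀ P : k[X], Irreducible P → P.Monic → P.natDegree ≤ d →
      (∃ n : ℕ, 0 < n ∧ P ∣ X ^ n - 1) → P ∣ X ^ e - 1)
    (A : Subalgebra L D)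
    [Module.Finite L A]
    (hd : Module.finrank L A ≤ d)
    {v : D} (hv : v ∈ A) {n : ℕ} (hn : 0 < n) (hvn : v ^ n = 1) : v ^ e = 1 := by
  have hint : IsIntegral L (⟨v, hv⟩ : A) := Algebra.IsIntegral.isIntegral _
  have hQe : minpoly L (⟨v, hv⟩ : A) = minpoly L v :=
    (minpoly.algHom_eq A.val Subtype.val_injective (⟨v, hv⟩ : A)).symm
  have hint' : IsIntegral L v := hint.map A.val
  have hdeg : (minpoly L v).natDegree ≤ d := by
    rw [← hQe]
    exact (minpoly.natDegree_le _).trans hd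
  set Q := minpoly L v with hQ
  have hQm : Q.Monic := minpoly.monic hint'
  have hQi : Irreducible Q := minpoly.irreducible hint'
  have hQd : Q ∣ (X ^ n - 1 : k[X]).map (algebraMap k L) := by
    apply minpoly.dvd
    simp [hvn]
  have hcoeff : ∀ i, ∃ r : k, algebraMap k L r = Q.coeff i := by
    intro i
    have h1 := isIntegral_coeff_of_dvd _ _ (monic_X_pow_sub_C (1 : k) hn.ne') hQm
      (by simpa using hQd) i
    obtain ⟨r, hr⟩ := hL (Q.coeff i : C)
      (Q.coeff i).2 (h1.map (IntermediateField.val L))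
    exact ⟨r, Subtype.ext hr⟩
  obtain ⟨P, hP, hPdeg, hPm⟩ : ∃ P : k[X], P.map (algebraMap k L) = Q ∧
      P.degree = Q.degree ∧ P.Monic :=
    lifts_and_degree_eq_and_monic ((lifts_iff_coeff_lifts _).mpr hcoeff) hQm
  have hPi : Irreducible P := by
    apply hPm.irreducible_of_irreducible_map (algebraMap k L)
    rwa [hP]
  have h2 := he P hPi hPm (by rwa [natDegree_eq_of_degree_eq hPdeg]) ⟨n, hn, by
    rw [← hP] at hQd
    exact (map_dvd_map' _).mp hQd⟩
  have h3 : Q ∣ (X ^ e - 1 : k[X]).map (algebraMap k L) := by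
    rw [← hP]; exact (map_dvd_map' _).mpr h2
  obtain ⟨S, hS⟩ := h3
  have h4 := congrArg (aeval v) hS
  rw [map_mul, hQ, minpoly.aeval, zero_mul] at h4
  simpa [sub_eq_zero] using h4

/-! ### Subalgebras finite over a smaller field -/

/-- If `D` is finite over `C` and `C` is algebraic over `L`, then finitely many elements of `D` lie
in a subalgebra finite over `L`: adjoin to `L` the structure constants of a basis of `D` over `C`
and the coordinates of these elements and of `1`, and take the elements of `D` whose coordinates
lie in the resulting finite extension `L'` of `L`. -/
theorem exists_finite_subalgebra {k C D : Type*} [Field k] [Field C] [Algebra k C]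
    (L : IntermediateField k C) [Algebra.IsAlgebraic L C] [DivisionRing D] [Algebra C D]
    [Module.Finite C D] (T : Finset D) :
    ∃ A : Subalgebra L D, Module.Finite L A ∧ ∀ y ∈ T, y ∈ A := by
  classical
  let b := Module.finBasis C D
  let T' : Finset D := insert 1 T ∪ Finset.image (fun ij : _ × _ => b ij.1 * b ij.2) Finset.univ
  let S : Finset C := Finset.image (fun yi : D × _ => b.repr yi.1 yi.2) (T' ×ˢ Finset.univ)
  let L' := IntermediateField.adjoin L (S : Set C)
  have hfin : Module.Finite L L' :=
    IntermediateField.finiteDimensional_adjoin fun z _ => Algebra.IsIntegral.isIntegral z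
  have hT' : ∀ y ∈ T', ∀ i, b.repr y i ∈ L' := by
    intro y hy i
    apply IntermediateField.subset_adjoin
    exact Finset.mem_coe.mpr (Finset.mem_image.mpr
      ⟨(y, i), Finset.mem_product.mpr ⟨hy, Finset.mem_univ _⟩, rfl⟩)
  have h1 : ∀ i, b.repr 1 i ∈ L' := hT' 1 (by simp [T'])
  have hrep : ∀ (c : L) (y : D) i, b.repr (c • y) i = (c : C) * b.repr y i := by
    intro c y i
    have : c • y = (c : C) • y := rfl
    rw [this, map_smul]; rfl
  let A : Subalgebra L D :=
    { carrier := {y | ∀ i, b.repr y i ∈ L'}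
      mul_mem' := by
        intro y z hy hz l
        rw [← b.sum_repr y, ← b.sum_repr z, Finset.sum_mul_sum, map_sum, Finset.sum_apply']
        refine sum_mem fun i _ => ?_
        rw [map_sum, Finset.sum_apply']
        refine sum_mem fun j _ => ?_
        rw [smul_mul_smul_comm, map_smul, Finsupp.smul_apply, smul_eq_mul]
        exact mul_mem (mul_mem (hy i) (hz j)) (hT' _ (Finset.mem_union_right _
          (Finset.mem_image.mpr ⟨(i, j), Finset.mem_univ _, rfl⟩)) l)
      add_mem' := by
        intro y z hy hz i
        rw [map_add]
        exact add_mem (hy i) (hz i)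
      algebraMap_mem' := by
        intro c i
        rw [Algebra.algebraMap_eq_smul_one, hrep]
        exact mul_mem (L'.algebraMap_mem c) (h1 i) }
  refine ⟨A, ?_, fun y hy => hT' y (by simp [T', hy])⟩
  let f : A →ₗ[L] (Fin (Module.finrank C D) → L') :=
    { toFun := fun y i => ⟨b.repr y i, y.2 i⟩
      map_add' := by
        intro y z; ext i; simp
      map_smul' := by
        intro c y; ext i
        exact hrep c y i }
  apply Module.Finite.of_injective f
  intro y z h
  apply Subtype.ext
  apply b.repr.injective
  ext i
  exact congrArg Subtype.val (congrFun h i)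

theorem inv_mem_of_finite {L D : Type*} [Field L] [DivisionRing D] [Algebra L D]
    (A : Subalgebra L D) [Module.Finite L A] {y : D} (hy : y ∈ A) : y⁻¹ ∈ A := by
  by_cases h0 : y = 0
  · simp [h0, A.zero_mem]
  have hinj : Function.Injective (LinearMap.mulLeft L (⟨y, hy⟩ : A)) := by
    intro u w h
    apply Subtype.ext
    exact mul_left_cancel₀ h0 (congrArg Subtype.val h)
  obtain ⟨z, hz⟩ := (LinearMap.injective_iff_surjective.mp hinj) 1
  have hz' : y * (z : D) = 1 := congrArg Subtype.val hz
  rw [inv_eq_of_mul_eq_one_right hz']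
  exact z.2

/-! ### Polynomial identities in a central variable -/

theorem eq_zero_of_infinite_central_roots {F D : Type*} [Field F] [DivisionRing D] [Algebra F D]
    (p : D[X]) (S : Set F) (hS : S.Infinite) (h : ∀ t ∈ S, p.eval (algebraMap F D t) = 0) :
    p = 0 := by
  ext i
  rw [coeff_zero]
  by_contra hne
  obtain ⟨φ, hφ⟩ := Module.Projective.exists_dual_ne_zero F hne
  -- Applying `φ` coefficientwise turns `p` into a polynomial over the field `F`.
  let r : F[X] := ∑ j ∈ p.support, C (φ (p.coeff j)) * X ^ j
  have hr : r = 0 := by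
    refine eq_zero_of_infinite_isRoot r (hS.mono fun t ht => ?_)
    have h1 := congrArg φ (h t ht)
    rw [eval_eq_sum, Polynomial.sum, map_sum, map_zero] at h1
    change r.eval t = 0
    rw [← h1]
    simp only [r, eval_finsetSum, eval_mul, eval_C, eval_pow, eval_X]
    refine Finset.sum_congr rfl fun j _ => ?_
    rw [← map_pow, ← Algebra.commutes, ← Algebra.smul_def, map_smul, smul_eq_mul, mul_comm]
  apply hφ
  have h2 := congrArg (fun s : F[X] => s.coeff i) hr
  simpa [r, finsetSum_coeff, coeff_C_mul, coeff_X_pow, hne] using h2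

/-- In `W ^ e - q ^ e = (W - q) * ∑ W ^ i * q ^ (e - 1 - i)` the second factor is nonzero: its
coefficient of highest degree is `e`. -/
theorem eq_of_pow_eq_of_monic {D : Type*} [DivisionRing D] {W q : D[X]} {e : ℕ}
    (he : (e : D) ≠ 0) (hW : W.Monic) (hq : q.Monic) (hdeg : W.natDegree = q.natDegree)
    (hc : Commute W q) (h : W ^ e = q ^ e) : W = q := by
  have h1 := hc.mul_geom_sum₂ e
  rw [h, sub_self] at h1
  rcases mul_eq_zero.mp h1 with h2 | h2
  · exact sub_eq_zero.mp h2
  exfalso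
  apply he
  have h3 := congrArg (fun p : D[X] => p.coeff (W.natDegree * (e - 1))) h2
  simp only [finsetSum_coeff, coeff_zero] at h3
  rw [Finset.sum_congr rfl (g := fun _ => (1 : D))] at h3
  · simpa using h3
  intro i hi
  have hi' : i < e := Finset.mem_range.mp hi
  have hm : (W ^ i * q ^ (e - 1 - i)).Monic := (hW.pow i).mul (hq.pow _)
  have hnd : (W ^ i * q ^ (e - 1 - i)).natDegree = W.natDegree * (e - 1) := by
    rw [(hW.pow i).natDegree_mul (hq.pow _), hW.natDegree_pow, hq.natDegree_pow, ← hdeg, ← add_mul,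
      mul_comm]
    congr 1
    omega
  rw [← hnd]
  exact hm.coeff_natDegree

/-- If the `e`-th power of `(x + t) (y + t)⁻¹` is `1` for infinitely many scalars `t`, then the
same holds for an indeterminate `t`. But `(x + t) (y + t)⁻¹` is then a series in `t⁻¹` with
constant term `1`, and the only such series whose `e`-th power is `1` is `1` itself, because `e` is
nonzero in `D`.
The proof clears denominators, with `q` the minimal polynomial of `-y`, a central multiple of
`X + y`. -/
theorem eq_of_infinite_pow_eq_one {F D : Type*} [Field F] [DivisionRing D]
    [Algebra F D] [Module.Finite F D]
    {x y : D} {e : ℕ} (he : (e : D) ≠ 0) (S : Set F) (hS : S.Infinite)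
    (hy : ∀ t ∈ S, y + algebraMap F D t ≠ 0)
    (h : ∀ t ∈ S, ((x + algebraMap F D t) * (y + algebraMap F D t)⁻¹) ^ e = 1) : x = y := by
  have hint : IsIntegral F (-y) := Algebra.IsIntegral.isIntegral _
  set m := minpoly F (-y) with hm
  have hmm : m.Monic := minpoly.monic hint
  set q : D[X] := m.map (algebraMap F D) with hq
  have hqm : q.Monic := hmm.map _
  -- `X` and `C (-y)` commute, so `X + C y` divides `m(X) - m(-y) = q`.
  obtain ⟨g, hqg⟩ : X + C y ∣ q := by
    have hXq : aeval (X : D[X]) m = q := rfl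
    have hCq : aeval (C (-y) : D[X]) m = 0 := by
      rw [aeval_eq_sum_range]
      have h0 : aeval (-y) m = 0 := minpoly.aeval F (-y)
      rw [aeval_eq_sum_range] at h0
      have h1 := congrArg (C : D →+* D[X]) h0
      rw [map_sum, map_zero] at h1
      rw [← h1]
      refine Finset.sum_congr rfl fun i _ => ?_
      rw [← smul_C, C_pow]
    have hcomm : Commute (X : D[X]) (C (-y)) := commute_X _
    have h2 : aeval (X : D[X]) m - aeval (C (-y) : D[X]) m = q := by rw [hXq, hCq, sub_zero]
    rw [← h2, aeval_eq_sum_range, aeval_eq_sum_range, ← Finset.sum_sub_distrib]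
    refine Finset.dvd_sum fun i _ => ?_
    rw [← smul_sub]
    have h3 : X + C y ∣ (X : D[X]) ^ i - C (-y) ^ i := by
      simpa using hcomm.sub_dvd_pow_sub_pow i
    obtain ⟨r, hr⟩ := h3
    exact ⟨m.coeff i • r, by rw [hr, mul_smul_comm]⟩
  replace hqg := hqg.symm
  have hgm : g.Monic := (monic_X_add_C y).of_mul_monic_left (by rwa [hqg])
  set W : D[X] := (X + C x) * g with hW
  have hWm : W.Monic := (monic_X_add_C x).mul hgm
  have hdeg : W.natDegree = q.natDegree := by
    rw [hW, ← hqg, (monic_X_add_C x).natDegree_mul hgm, (monic_X_add_C y).natDegree_mul hgm,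
      natDegree_X_add_C, natDegree_X_add_C]
  have hcq : ∀ p : D[X], Commute p q := by
    intro p
    induction p using Polynomial.induction_on' with
    | add p r hp hr => exact hp.add_left hr
    | monomial n a =>
      rw [← C_mul_X_pow_eq_monomial]
      refine Commute.mul_left ?_ ((commute_X q).pow_left n)
      ext i
      rw [coeff_C_mul, coeff_mul_C, hq, coeff_map]
      exact (Algebra.commutes _ _).symm
  let ev : F → D[X] →+* D := fun t => eval₂RingHom' (RingHom.id D) (algebraMap F D t)
    fun a => (Algebra.commutes t a).symm
  have hev : ∀ t p, ev t p = p.eval (algebraMap F D t) := fun t p => rfl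
  have hpow : W ^ e = q ^ e := by
    rw [← sub_eq_zero]
    apply eq_zero_of_infinite_central_roots _ S hS
    intro t ht
    rw [← hev, map_sub, map_pow, map_pow, sub_eq_zero]
    have h1 : ev t W = (x + algebraMap F D t) * (y + algebraMap F D t)⁻¹ * ev t q := by
      have e1 : ∀ z, ev t (X + C z) = z + algebraMap F D t := by
        intro z; rw [hev]; simp [add_comm]
      rw [hW, ← hqg, map_mul, map_mul, e1, e1, mul_assoc, inv_mul_cancel_left₀ (hy t ht)]
    have h2 : ev t q = algebraMap F D (m.eval t) := by
      rw [hev, hq, eval_map_algebraMap, aeval_algebraMap_apply, coe_aeval_eq_eval]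
    rw [h1, h2, Commute.mul_pow (Algebra.commutes _ _).symm, h t ht, one_mul]
  have hWq := eq_of_pow_eq_of_monic he hWm hqm hdeg (hcq W) hpow
  rw [hW, ← hqg] at hWq
  have := mul_right_cancel₀ hgm.ne_zero hWq
  simpa using this

/-! ### Radicality over centralizers -/

/-- For `x ∉ K`, choose `n` such that `b = a ^ n`, `b₁ = x b x⁻¹` and
`b₂ = (1 + x) b (1 + x)⁻¹` all lie in `K`. Then `(b₂ - b₁) x = b - b₂`, so `b₁ = b₂ = b`, since
otherwise `x ∈ K`; thus `b` commutes with `x`. An `x ∈ K` is the difference of two elements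
outside `K`. -/
theorem radical_over_centralizer {D : Type*} [DivisionRing D]
    (K : Subring D) (hKdiv : ∀ x ∈ K, x⁻¹ ∈ K) (hKne : K ≠ ⊤)
    (N : Subgroup Dˣ) [N.Normal]
    (hrad : ∀ a ∈ N, ∃ n : ℕ, 0 < n ∧ ((a : Dˣ) : D) ^ n ∈ K) :
    ∀ a ∈ N, ∀ x : D, ∃ n : ℕ, 0 < n ∧ Commute ((a : D) ^ n) x := by
  have key : ∀ a ∈ N, ∀ x : D, x ∉ K → ∃ n : ℕ, 0 < n ∧ Commute ((a : D) ^ n) x := by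
    intro a ha x hx
    have hx0 : x ≠ 0 := fun h => hx (h ▸ K.zero_mem)
    have hx1 : 1 + x ≠ 0 := fun h => hx (by
      rw [← neg_eq_of_add_eq_zero_right h]; exact K.neg_mem K.one_mem)
    let u := Units.mk0 x hx0
    let w := Units.mk0 (1 + x) hx1
    obtain ⟨n₀, h₀, hn₀⟩ := hrad a ha
    obtain ⟨n₁, h₁, hn₁⟩ := hrad _ (Subgroup.Normal.conj_mem ‹_› a ha u)
    obtain ⟨n₂, h₂, hn₂⟩ := hrad _ (Subgroup.Normal.conj_mem ‹_› a ha w)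
    have hn : 0 < n₀ * n₁ * n₂ := by positivity
    set n := n₀ * n₁ * n₂ with hndef
    have e0 : (a : D) ^ n ∈ K := by
      rw [hndef, mul_assoc, pow_mul]; exact K.pow_mem hn₀ _
    have e1 : x * (a : D) ^ n * x⁻¹ ∈ K := by
      have h : ((u * a * u⁻¹ : Dˣ) : D) ^ n ∈ K := by
        rw [hndef, mul_comm n₀, mul_assoc n₁, pow_mul]; exact K.pow_mem hn₁ _
      rw [← Units.val_pow_eq_pow_val, conj_pow] at h
      simpa [u] using h
    have e2 : (1 + x) * (a : D) ^ n * (1 + x)⁻¹ ∈ K := by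
      have h : ((w * a * w⁻¹ : Dˣ) : D) ^ n ∈ K := by
        rw [hndef, mul_comm _ n₂, pow_mul]; exact K.pow_mem hn₂ _
      rw [← Units.val_pow_eq_pow_val, conj_pow] at h
      simpa [w] using h
    refine ⟨n, hn, ?_⟩
    set b := (a : D) ^ n
    set b₁ := x * b * x⁻¹ with hb₁
    set b₂ := (1 + x) * b * (1 + x)⁻¹ with hb₂
    have f1 : b₁ * x = x * b := by rw [hb₁, inv_mul_cancel_right₀ hx0]
    have f2 : b₂ * (1 + x) = (1 + x) * b := by rw [hb₂, inv_mul_cancel_right₀ hx1]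
    have f3 : (b₂ - b₁) * x = b - b₂ := by
      rw [sub_mul, f1]
      rw [mul_add, add_mul, mul_one, one_mul] at f2
      rw [sub_eq_sub_iff_add_eq_add, add_comm, f2]
    by_cases hb : b₂ - b₁ = 0
    · rw [hb, zero_mul] at f3
      have : b = b₁ := (sub_eq_zero.mp f3.symm).trans (sub_eq_zero.mp hb)
      rw [← this] at f1
      exact f1
    · exfalso
      apply hx
      rw [← inv_mul_cancel_left₀ hb x, f3]
      exact K.mul_mem (hKdiv _ (K.sub_mem e2 e1)) (K.sub_mem e0 e2)
  intro a ha x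
  by_cases hx : x ∈ K
  · obtain ⟨y, hy⟩ : ∃ y, y ∉ K := by
      by_contra! h
      exact hKne (eq_top_iff.mpr fun y _ => h y)
    have hxy : x + y ∉ K := fun h => hy (by simpa using K.sub_mem h hx)
    obtain ⟨n, hn, h1⟩ := key a ha y hy
    obtain ⟨m, hm, h2⟩ := key a ha _ hxy
    refine ⟨n * m, by positivity, ?_⟩
    have h1' : Commute ((a : D) ^ (n * m)) y := by rw [pow_mul]; exact h1.pow_left m
    have h2' : Commute ((a : D) ^ (n * m)) (x + y) := by
      rw [mul_comm, pow_mul]; exact h2.pow_left n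
    simpa using h2'.sub_right h1'
  · exact key a ha x hx

theorem exists_pow_commute_all {D : Type*} [DivisionRing D]
    (a : D) (h : ∀ x : D, ∃ n : ℕ, 0 < n ∧ Commute (a ^ n) x)
    (S : Finset D) : ∃ n : ℕ, 0 < n ∧ ∀ x ∈ S, Commute (a ^ n) x := by
  choose f hf0 hf using h
  refine ⟨∏ x ∈ S, f x, Finset.prod_pos fun x _ => hf0 x, fun x hx => ?_⟩
  obtain ⟨m, hm⟩ := Finset.dvd_prod_of_mem f hx
  rw [hm, pow_mul]
  exact (hf x).pow_left m

/-! ### Division rings finite over their center -/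

/-- In characteristic `p` a division ring has no elements of order `p`, so the `p`-part of an
exponent can be dropped. -/
theorem exists_torsion_exponent {D : Type*} [DivisionRing D] {e : ℕ} (he : 0 < e) :
    ∃ e' : ℕ, (e' : D) ≠ 0 ∧ ∀ v : D, v ^ e = 1 → v ^ e' = 1 := by
  obtain ⟨p, hp⟩ := ExpChar.exists D
  cases hp with
  | zero => exact ⟨e, by exact_mod_cast he.ne', fun v h => h⟩
  | prime hp =>
    obtain ⟨s, e', hpe, rfl⟩ := Nat.exists_eq_pow_mul_and_not_dvd he.ne' p hp.ne_one
    refine ⟨e', ?_, ?_⟩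
    · rwa [Ne, CharP.cast_eq_zero_iff D p]
    · intro v hv
      have := ExpChar.prime (R := D) hp
      have h1 : (v ^ e' - 1) ^ p ^ s = 0 := by
        rw [sub_pow_expChar_pow_of_commute _ _ (Commute.one_right _), one_pow,
          ← pow_mul, mul_comm, hv, sub_self]
      exact sub_eq_zero.mp (pow_eq_zero_iff (pow_pos hp.pos s).ne' |>.mp h1)

/-- A commutator `v` has norm `1` over the center; if `v ^ n` is the central element `c`, taking
norms gives `c ^ [D : F] = 1`. -/
theorem commutator_torsion {D : Type*} [DivisionRing D]
    [Module.Finite (Subring.center D) D] {N : Subgroup Dˣ} [N.Normal]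
    (hrad : ∀ a ∈ N, ∃ n : ℕ, 0 < n ∧ ((a : Dˣ) : D) ^ n ∈ Subring.center D)
    {a : Dˣ} (ha : a ∈ N) (u : Dˣ) :
    ∃ n : ℕ, 0 < n ∧ ((u * a * u⁻¹ * a⁻¹ : Dˣ) : D) ^ n = 1 := by
  obtain ⟨n, hn, h⟩ := hrad (u * a * u⁻¹ * a⁻¹)
    (N.mul_mem (Subgroup.Normal.conj_mem ‹_› a ha u) (N.inv_mem ha))
  set v : D := ((u * a * u⁻¹ * a⁻¹ : Dˣ) : D) with hv
  let C := Subring.center D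
  let ν : D →* C := Algebra.norm C
  have h1 : ν v = 1 := by
    have e : v = (Units.coeHom D) (u * a * u⁻¹ * a⁻¹) := rfl
    have e2 : ν v = (((Units.map ν) (u * a * u⁻¹ * a⁻¹) : Cˣ) : C) := rfl
    rw [e2, map_mul, map_mul, map_mul, map_inv, map_inv, mul_right_comm]
    simp
  let c : C := ⟨v ^ n, h⟩
  have h2 : v ^ n = algebraMap C D c := rfl
  have h3 : ν (v ^ n) = c ^ Module.finrank C D := by
    rw [h2]; exact Algebra.norm_algebraMap c
  rw [map_pow, h1, one_pow] at h3
  refine ⟨n * Module.finrank C D, Nat.mul_pos hn Module.finrank_pos, ?_⟩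
  rw [pow_mul, h2, ← map_pow, ← h3, map_one]

/-- Let `F` be the center of `D` and `L` a purely transcendental extension of `k` over which `F` is
algebraic. For `t ∈ L` the elements `(x + t) a (x + t)⁻¹ a⁻¹` are torsion and lie in one subalgebra
finite over `L`, so they have a common exponent, and `eq_of_infinite_pow_eq_one` applies with
`y = a x a⁻¹`. -/
theorem commute_of_rootsBounded {D : Type*} [DivisionRing D]
    {k : Type*} [Field k] (hk : RootsBounded k)
    [Algebra k (Subring.center D)] [Module.Finite (Subring.center D) D] (N : Subgroup Dˣ)
    [N.Normal]
    (hrad : ∀ a ∈ N, ∃ n : ℕ, 0 < n ∧ ((a : Dˣ) : D) ^ n ∈ Subring.center D)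
    (a : Dˣ) (ha : a ∈ N) (x : D) : (a : D) * x = x * a := by
  classical
  by_contra hax
  let F := Subring.center D
  obtain ⟨s, hs⟩ := exists_isTranscendenceBasis k F
  let L := IntermediateField.adjoin k (Set.range ((↑) : s → F))
  have hLalg : Algebra.IsAlgebraic L F := hs.isAlgebraic_field
  have hL : ∀ c ∈ L, IsIntegral k c → ∃ r : k, algebraMap k F r = c :=
    fun c hc hi => mem_range_of_isIntegral_purelyTranscendental hs.1 c hc hi
  obtain ⟨A, hAfin, hA⟩ := exists_finite_subalgebra L ({(a : D), x} : Finset D)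
  have haA : (a : D) ∈ A := hA _ (by simp)
  have hxA : x ∈ A := hA _ (by simp)
  -- If `L` were finite, then so would be `A`, which would be commutative by Wedderburn's theorem.
  have hLinf : Infinite L := by
    by_contra hfin
    rw [not_infinite_iff_finite] at hfin
    have : Finite A := Module.finite_of_finite L
    have hcomm := (Finite.isDomain_to_isField A).mul_comm ⟨a, haA⟩ ⟨x, hxA⟩
    exact hax (congrArg Subtype.val hcomm)
  obtain ⟨e₀, he₀, hb⟩ := hk (Module.finrank L A)
  obtain ⟨e, he, he'⟩ := exists_torsion_exponent (D := D) he₀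
  have hne : ∀ t : F, x + algebraMap F D t ≠ 0 := by
    intro t h
    apply hax
    rw [eq_neg_of_add_eq_zero_left h]
    exact (Commute.neg_right (Algebra.commutes t (a : D)).symm).eq
  let y : D := a * x * (a : D)⁻¹
  have hconj : ∀ t : F, y + algebraMap F D t = a * (x + algebraMap F D t) * (a : D)⁻¹ := by
    intro t
    rw [mul_add, add_mul, ← Algebra.commutes t (a : D), mul_inv_cancel_right₀ a.ne_zero]
  have hxy : x = y := by
    refine eq_of_infinite_pow_eq_one (F := F) he (L : Set F) ?_ ?_ ?_
    · exact Set.infinite_coe_iff.mp hLinf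
    · intro t _
      rw [hconj]
      exact mul_ne_zero (mul_ne_zero a.ne_zero (hne t)) (inv_ne_zero a.ne_zero)
    · intro t ht
      apply he'
      have htA : algebraMap F D t ∈ A := A.algebraMap_mem (⟨t, ht⟩ : L)
      let u := Units.mk0 _ (hne t)
      obtain ⟨n, hn, h⟩ := commutator_torsion hrad ha u
      have hv : ((u * a * u⁻¹ * a⁻¹ : Dˣ) : D) =
          (x + algebraMap F D t) * (y + algebraMap F D t)⁻¹ := by
        rw [hconj]
        simp [u, mul_assoc]
      rw [hv] at h
      refine pow_eq_one_of_finrank_le hL hb A le_rfl ?_ hn h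
      have hyA : y ∈ A := A.mul_mem (A.mul_mem haA hxA) (inv_mem_of_finite A haA)
      exact A.mul_mem (A.add_mem hxA htA) (inv_mem_of_finite A (A.add_mem hyA htA))
  apply hax
  conv_rhs => rw [hxy]
  simp [y]

theorem commute_of_radical_over_center {D : Type*} [DivisionRing D]
    [Module.Finite (Subring.center D) D] (N : Subgroup Dˣ) [N.Normal]
    (hrad : ∀ a ∈ N, ∃ n : ℕ, 0 < n ∧ ((a : Dˣ) : D) ^ n ∈ Subring.center D)
    (a : Dˣ) (ha : a ∈ N) (x : D) : (a : D) * x = x * a := by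
  obtain ⟨p, hp⟩ := CharP.exists (Subring.center D)
  rcases CharP.char_is_prime_or_zero (Subring.center D) p with hpp | rfl
  · have : Fact p.Prime := ⟨hpp⟩
    let _ : Algebra (ZMod p) (Subring.center D) := ZMod.algebra _ p
    exact commute_of_rootsBounded (rootsBounded_of_finite (ZMod p)) N hrad a ha x
  · have : CharZero (Subring.center D) := CharP.charP_to_charZero _
    exact commute_of_rootsBounded rootsBounded_rat N hrad a ha x

end

/-! ### Reduction to division rings finite over their center -/

/-- A subalgebra closed under inverses, as a division ring; it is finite over its own center, which
contains the center of `D`. -/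
theorem exists_subfield {D : Type*} [DivisionRing D]
    (E : Subalgebra (Subring.center D) D) (hinv : ∀ x ∈ E, x⁻¹ ∈ E)
    [hE : Module.Finite (Subring.center D) E] :
    ∃ M : Subfield D, (∀ x, x ∈ M ↔ x ∈ E) ∧ Module.Finite (Subring.center M) M := by
  let M : Subfield D := { E.toSubring with inv_mem' := hinv }
  refine ⟨M, fun x => Iff.rfl, ?_⟩
  let φ : Subring.center D →+* Subring.center M :=
    { toFun := fun c => ⟨⟨c, E.algebraMap_mem c⟩, by
        rw [Subring.mem_center_iff]
        intro g
        exact Subtype.ext (Subring.mem_center_iff.mp c.2 g)⟩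
      map_one' := rfl
      map_mul' := fun _ _ => rfl
      map_zero' := rfl
      map_add' := fun _ _ => rfl }
  let _ : Algebra (Subring.center D) (Subring.center M) := φ.toAlgebra
  let _ : Module (Subring.center D) M := inferInstanceAs (Module (Subring.center D) E)
  have hfin : Module.Finite (Subring.center D) M := hE
  have : IsScalarTower (Subring.center D) (Subring.center M) M := by
    refine ⟨fun c z w => ?_⟩
    apply Subtype.ext
    exact mul_assoc (c : D) z w
  exact Module.Finite.of_restrictScalars_finite (Subring.center D) (Subring.center M) M

/-- Let `D` be a locally finite division ring with center `F` (every finite subset of `D`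
is contained in a division subring containing `F` which is finite-dimensional over `F`),
and let `N` be a normal subgroup of `D^*` that is radical over a proper division subring
`K` of `D`. Then `N ⊆ F`. -/
theorem stmt_10 (D : Type*) [DivisionRing D]
    (hlf : ∀ S : Finset D, ∃ E : Subalgebra (Subring.center D) D,
      (∀ x ∈ E, x⁻¹ ∈ E) ∧ (S : Set D) ⊆ E ∧ Module.Finite (Subring.center D) E)
    (K : Subring D) (hKdiv : ∀ x ∈ K, x⁻¹ ∈ K) (hKne : K ≠ ⊤)
    (N : Subgroup Dˣ) [N.Normal]
    (hrad : ∀ a ∈ N, ∃ n : ℕ, 0 < n ∧ ((a : Dˣ) : D) ^ n ∈ K) :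
    ∀ a ∈ N, ((a : Dˣ) : D) ∈ Subring.center D := by
  classical
  intro a ha
  rw [Subring.mem_center_iff]
  intro x
  obtain ⟨E, hinv, hS, hEfin⟩ := hlf {(a : D), x}
  obtain ⟨T, hT⟩ := (Module.finite_def.mp hEfin)
  obtain ⟨E', hmem, hfin⟩ := exists_subfield E hinv
  have haE : (a : D) ∈ E' := (hmem _).mpr (hS (by simp))
  have hxE : x ∈ E' := (hmem _).mpr (hS (by simp))
  let ι : E'ˣ →* Dˣ := Units.map (E'.subtype : E' →* D)
  have hrad' : ∀ b ∈ N.comap ι, ∃ n : ℕ, 0 < n ∧ ((b : E'ˣ) : E') ^ n ∈ Subring.center E' := by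
    intro b hb
    obtain ⟨n, hn, hc⟩ := exists_pow_commute_all ((ι b : Dˣ) : D)
      (radical_over_centralizer K hKdiv hKne N hrad (ι b) hb) (T.image Subtype.val)
    refine ⟨n, hn, ?_⟩
    -- Commuting with a finite spanning set of `E` suffices, as the scalars are central.
    have hall : ∀ z : E, Commute (((ι b : Dˣ) : D) ^ n) (z : D) := by
      intro z
      have hz : z ∈ Submodule.span (Subring.center D) (T : Set E) := hT ▸ Submodule.mem_top
      induction hz using Submodule.span_induction with
      | mem z hz => exact hc _ (Finset.mem_image_of_mem _ hz)
      | zero => exact Commute.zero_right _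
      | add z w _ _ hz hw => exact hz.add_right hw
      | smul c z _ hz => exact Commute.smul_right hz c
    rw [Subring.mem_center_iff]
    intro g
    exact Subtype.ext (hall ⟨g, (hmem _).mp g.2⟩).symm.eq
  let a' : E'ˣ := Units.mk0 ⟨a, haE⟩ fun h => a.ne_zero (congrArg Subtype.val h)
  have ha' : a' ∈ N.comap ι := by
    rw [Subgroup.mem_comap]
    convert ha
    exact Units.ext rfl
  have h := commute_of_radical_over_center (N.comap ι) hrad' a' ha' ⟨x, hxE⟩
  exact (congrArg Subtype.val h).symm
end
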